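/- A semisimple Z/3Z-graded complex Lie algebra g = g_0 ⊕ g_1 ⊕ g_2 of dimension 24 whose degree-zero part g_0 is an abelian 6-dimensional subalgebra acting semisimply on g_1 and g_2 is isomorphic to the direct sum of three copies of sl_3 (type A_2^3). -/

import Mathlib

open LieAlgebra

/-- The direct product of two Lie rings, with componentwise bracket. -/
instance prodLieRing {A B : Type*} [LieRing A] [LieRing B] : LieRing (A × B) where
  bracket x y := (⁅x.1, y.1⁆, ⁅x.2, y.2⁆)
  add_lie x y z := Prod.ext (add_lie x.1 y.1 z.1) (add_lie x.2 y.2 z.2)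
  lie_add x y z := Prod.ext (lie_add x.1 y.1 z.1) (lie_add x.2 y.2 z.2)
  lie_self x := Prod.ext (lie_self x.1) (lie_self x.2)
  leibniz_lie x y z := Prod.ext (leibniz_lie x.1 y.1 z.1) (leibniz_lie x.2 y.2 z.2)

/-- The direct product of two Lie algebras. -/
instance prodLieAlgebra {R A B : Type*} [CommRing R] [LieRing A] [LieRing B]
    [LieAlgebra R A] [LieAlgebra R B] : LieAlgebra R (A × B) where
  lie_smul t x y := Prod.ext (lie_smul t x.1 y.1) (lie_smul t x.2 y.2)

/-!
If `g 0` centralizes `x ∈ g k` for some `k ≠ 0`, then `ad x` is nilpotent and, after pairing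
with `g (-k)`, `x` lies in the kernel of the Killing form. Hence `g 0` is its own normalizer, that
is, a Cartan subalgebra, and each root space lies in a single nonzero degree. If the rank is `2 * n`
and the dimension `8 * n`, there are `6 * n` roots, half of them of degree `1`.

Two roots of degree `1` never differ by a root, which would have degree `0`. So they are orthogonal,
or their sum is a root of degree `2` and they are completed by its negative to a triangle of roots
of degree `1` with sum zero, spanning a root system of type `A₂`. The operator
`E x = ∑ ⟨x, α^∨⟩ α`, summed over the roots `α` of degree `1`, multiplies such a root by `3` if it
lies in a triangle and by `2` otherwise. Thus `3 - E` is idempotent, and its trace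
`3 * (2 * n) - 2 * (3 * n)` is zero, so `3 - E = 0` and every root of degree `1` lies in a triangle.
Distinct triangles are strongly orthogonal, and each of the `n` triangles generates an `sl₃`.
-/

/-! ### Graded Lie algebras -/

section GradedLieAlgebra

open DirectSum SetLike.GradedBracket

section General

variable {K L A : Type*} [CommRing K] [LieRing L] [LieAlgebra K L] [DecidableEq A]

lemma coe_decompose_lie_of_mem [AddCancelCommMonoid A] (g : A → Submodule K L) [GradedLieAlgebra g]
    {i : A} {x : L} (hx : x ∈ g i) (y : L) (j : A) :
    (decompose g ⁅x, y⁆ (i + j) : L) = ⁅x, (decompose g y j : L)⁆ := by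
  induction y using Decomposition.inductionOn g with
  | zero => simp
  | @homogeneous k y =>
    obtain rfl | hkj := eq_or_ne k j
    · rw [decompose_of_mem_same g (bracket_mem hx y.2), decompose_of_mem_same g y.2]
    · rw [decompose_of_mem_ne g (bracket_mem hx y.2) (by simpa using hkj),
        decompose_of_mem_ne g y.2 hkj, lie_zero]
  | add y z hy hz =>
    simp only [lie_add, decompose_add, DirectSum.add_apply, Submodule.coe_add, hy, hz]

lemma ad_pow_mem [AddCommMonoid A] {g : A → Submodule K L} [GradedLieAlgebra g] {i j : A} {x y : L}
    (hx : x ∈ g i) (hy : y ∈ g j) (m : ℕ) : (ad K L x ^ m) y ∈ g (m • i + j) := by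
  induction m with
  | zero => simpa using hy
  | succ m ih =>
    rw [pow_succ', Module.End.mul_apply, ad_apply, succ_nsmul', add_assoc]
    exact bracket_mem hx ih

/-- The degree-zero part of a graded Lie algebra, as a subalgebra. -/
def degreeZeroSubalgebra [AddCommMonoid A] (g : A → Submodule K L) [GradedLieAlgebra g] :
    LieSubalgebra K L where
  toSubmodule := g 0
  lie_mem' hx hy := by simpa using bracket_mem (ℒ := g) (i := 0) (j := 0) hx hy

end General

section KillingForm

variable {K L A : Type*} [Field K] [LieRing L] [LieAlgebra K L] [FiniteDimensional K L]
  [AddCommGroup A] [DecidableEq A] (g : A → Submodule K L) [GradedLieAlgebra g]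

lemma killingForm_eq_zero_of_add_ne_zero {i j : A} (hij : i + j ≠ 0) {x y : L} (hx : x ∈ g i)
    (hy : y ∈ g j) : killingForm K L x y = 0 :=
  LinearMap.trace_eq_zero_of_mapsTo_ne (Decomposition.isInternal g) (fun k ↦ i + (j + k))
    (fun k hk ↦ hij (by simpa [← add_assoc] using hk))
    fun _ _ hz ↦ bracket_mem hx (bracket_mem hy hz)

lemma eq_zero_of_mem_of_forall_killingForm_eq_zero [IsKilling K L] {i : A} {x : L} (hx : x ∈ g i)
    (h : ∀ y ∈ g (-i), killingForm K L x y = 0) : x = 0 := by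
  have hker : x ∈ LinearMap.ker (killingForm K L) := by
    refine LinearMap.mem_ker.mpr (LinearMap.ext fun y ↦ ?_)
    induction y using Decomposition.inductionOn g with
    | zero => simp
    | @homogeneous j y =>
      by_cases hij : i + j = 0
      · exact h y (neg_eq_of_add_eq_zero_right hij ▸ y.2)
      · exact killingForm_eq_zero_of_add_ne_zero g hij hx y.2
    | add y z hy hz => simp_all
  simpa using hker

end KillingForm

section PrimeOrder

variable {K L : Type*} [Field K] [LieRing L] [LieAlgebra K L]
  {p : ℕ} [Fact p.Prime] (g : ZMod p → Submodule K L) [GradedLieAlgebra g] {k : ZMod p} {x : L}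

lemma isNilpotent_ad_of_forall_lie_eq_zero (hk : k ≠ 0) (hx : x ∈ g k)
    (hx₀ : ∀ h ∈ g 0, ⁅h, x⁆ = 0) : IsNilpotent (ad K L x) := by
  refine ⟨p, LinearMap.ext fun y ↦ ?_⟩
  induction y using Decomposition.inductionOn g with
  | zero => simp
  | add y z hy hz => simp_all
  | @homogeneous i y =>
    obtain ⟨m, hm⟩ : ∃ m < p, m • k + i = 0 :=
      ⟨(-i / k).val, ZMod.val_lt _, by simp [hk]⟩
    have hzero : (ad K L x ^ (m + 1)) y = 0 := by
      have hmem := ad_pow_mem hx y.2 m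
      rw [hm.2] at hmem
      rw [pow_succ', Module.End.mul_apply, ad_apply, ← lie_skew, hx₀ _ hmem, neg_zero]
    exact Module.End.pow_map_zero_of_le hm.1 hzero

variable [FiniteDimensional K L] [IsKilling K L]

lemma eq_zero_of_mem_of_forall_lie_eq_zero (hk : k ≠ 0) (hx : x ∈ g k)
    (hx₀ : ∀ h ∈ g 0, ⁅h, x⁆ = 0) : x = 0 := by
  refine eq_zero_of_mem_of_forall_killingForm_eq_zero g hx fun y hy ↦ ?_
  have hxy : ⁅x, y⁆ = 0 := by
    have hmem : ⁅x, y⁆ ∈ g 0 := by simpa using bracket_mem hx hy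
    refine eq_zero_of_mem_of_forall_killingForm_eq_zero g hmem fun h hh ↦ ?_
    rw [← lie_skew, map_neg, LinearMap.neg_apply, LieModule.traceForm_apply_lie_apply, ← lie_skew,
      hx₀ h (by simpa using hh), neg_zero, map_zero, neg_zero]
  have hcomm : Commute (ad K L x) (ad K L y) := LinearMap.ext fun z ↦ by
    simpa [hxy] using leibniz_lie x y z
  exact (LinearMap.isNilpotent_trace_of_isNilpotent
    (hcomm.isNilpotent_mul_right (isNilpotent_ad_of_forall_lie_eq_zero g hk hx hx₀))).eq_zero

lemma isCartanSubalgebra_degreeZeroSubalgebra (habelian : ∀ x ∈ g 0, ∀ y ∈ g 0, ⁅x, y⁆ = 0) :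
    (degreeZeroSubalgebra g).IsCartanSubalgebra where
  nilpotent := by
    have : IsLieAbelian (degreeZeroSubalgebra g) :=
      ⟨fun x y ↦ Subtype.ext (habelian x x.2 y y.2)⟩
    infer_instance
  self_normalizing := by
    refine le_antisymm (fun x hx ↦ ?_) (LieSubalgebra.le_normalizer _)
    classical
    rw [LieSubalgebra.mem_normalizer_iff'] at hx
    have hcomponent (k : ZMod p) (hk : k ≠ 0) : (decompose g x k : L) = 0 := by
      refine eq_zero_of_mem_of_forall_lie_eq_zero g hk (decompose g x k).2 fun h hh ↦ ?_
      rw [← coe_decompose_lie_of_mem g hh, zero_add]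
      exact decompose_of_mem_ne g (hx h hh) hk.symm
    rw [← sum_support_decompose g x]
    refine Submodule.sum_mem _ fun k _ ↦ ?_
    obtain rfl | hk := eq_or_ne k 0
    · exact (decompose g x 0).2
    · rw [hcomponent k hk]
      exact zero_mem _

end PrimeOrder

end GradedLieAlgebra

/-! ### Root systems graded by `ZMod 3` -/

section RootPairing

variable {ι R M N : Type*} [Finite ι] [Field R] [CharZero R] [AddCommGroup M] [Module R M]
  [AddCommGroup N] [Module R N] {P : RootPairing ι R M N} [P.IsCrystallographic] [P.IsReduced]
  {i j : ι}

lemma pairing_eq_neg_one_of_add_mem_range (hadd : P.root i + P.root j ∈ Set.range P.root)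
    (hsub : P.root j - P.root i ∉ Set.range P.root)
    (hadd₂ : P.root j + 2 • P.root i ∉ Set.range P.root) : P.pairing j i = -1 := by
  have h := P.linearIndependent_of_add_mem_range_root' hadd
  have hbot : ¬ 1 ≤ P.chainBotCoeff i j := by
    rwa [← P.root_sub_nsmul_mem_range_iff_le_chainBotCoeff h, one_smul]
  have htop : 1 ≤ P.chainTopCoeff i j := P.one_le_chainTopCoeff_of_root_add_mem hadd
  have htop₂ : ¬ 2 ≤ P.chainTopCoeff i j := by
    rwa [← P.root_add_nsmul_mem_range_iff_le_chainTopCoeff h]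
  have hpair : P.pairingIn ℤ j i = -1 := by
    rw [← P.chainBotCoeff_sub_chainTopCoeff h]; lia
  simpa [hpair] using (P.algebraMap_pairingIn ℤ j i).symm

end RootPairing

section Triangle

variable {ι R M N : Type*} [CommRing R] [AddCommGroup M] [Module R M]
  [AddCommGroup N] [Module R N]

/-- The positive half of a root system of type `A₂`, up to the sign of the highest root: three
roots which add up to zero and no two of which differ by a root. -/
structure IsTriangle (P : RootPairing ι R M N) (r : Fin 3 → ι) : Prop where
  sum_root_eq_zero : ∑ b, P.root (r b) = 0
  sub_notMem : ∀ b c, P.root (r b) - P.root (r c) ∉ Set.range P.root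

/-- A partition of the roots of `P`, up to sign, into pairwise strongly orthogonal triangles
indexed by `κ`. It exhibits `P` as a root system of type `A₂ ⊕ ⋯ ⊕ A₂`. -/
structure IsTriangulation {κ : Type*} (P : RootPairing ι R M N) (r : κ → Fin 3 → ι) : Prop where
  isTriangle : ∀ a, IsTriangle P (r a)
  pairing_eq_zero : ∀ ⦃a a'⦄, a ≠ a' → ∀ b c, P.pairing (r a b) (r a' c) = 0
  add_notMem : ∀ ⦃a a'⦄, a ≠ a' → ∀ b c, P.root (r a b) + P.root (r a' c) ∉ Set.range P.root
  sub_notMem : ∀ ⦃a a'⦄, a ≠ a' → ∀ b c, P.root (r a b) - P.root (r a' c) ∉ Set.range P.root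
  exists_root_eq : ∀ i, ∃ a b, P.root i = P.root (r a b) ∨ P.root i = -P.root (r a b)

/-- A grading of the roots of `P` by `A` for which nothing has degree zero. The degrees need not
come from a homomorphism on the root lattice; compatibility is only asked for roots. -/
structure IsRootGrading {A : Type*} [AddGroup A] (P : RootPairing ι R M N) (d : ι → A) : Prop where
  ne_zero : ∀ i, d i ≠ 0
  neg : ∀ ⦃i j⦄, P.root j = -P.root i → d j = -d i
  add : ∀ ⦃i j k⦄, P.root k = P.root i + P.root j → d k = d i + d j

end Triangle

namespace IsTriangle

section CommRing

variable {ι R M N : Type*} [CommRing R] [AddCommGroup M] [Module R M]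
  [AddCommGroup N] [Module R N] {P : RootPairing ι R M N} {r : Fin 3 → ι}

lemma comp_equiv (h : IsTriangle P r) (σ : Equiv.Perm (Fin 3)) : IsTriangle P (r ∘ σ) where
  sum_root_eq_zero := (Equiv.sum_comp σ fun b ↦ P.root (r b)).trans h.sum_root_eq_zero
  sub_notMem b c := h.sub_notMem (σ b) (σ c)

lemma zero_add_one (h : IsTriangle P r) : P.root (r 0) + P.root (r 1) = -P.root (r 2) := by
  simpa [Fin.sum_univ_three, eq_neg_iff_add_eq_zero] using h.sum_root_eq_zero

lemma two_smul_zero_add_one_notMem (h : IsTriangle P r) :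
    P.root (r 1) + 2 • P.root (r 0) ∉ Set.range P.root := by
  have hsub : P.root (r 1) + 2 • P.root (r 0) = P.root (r 0) - P.root (r 2) := by
    rw [two_smul, sub_eq_add_neg, ← h.zero_add_one]; abel
  rw [hsub]
  exact h.sub_notMem 0 2

end CommRing

variable {ι R M N : Type*} [Finite ι] [Field R] [CharZero R] [AddCommGroup M] [Module R M]
  [AddCommGroup N] [Module R N] {P : RootPairing ι R M N} [P.IsCrystallographic] [P.IsReduced]
  {r : Fin 3 → ι}

lemma pairing_one_zero (h : IsTriangle P r) : P.pairing (r 1) (r 0) = -1 :=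
  pairing_eq_neg_one_of_add_mem_range (h.zero_add_one ▸ P.neg_root_mem (r 2)) (h.sub_notMem 1 0)
    h.two_smul_zero_add_one_notMem

lemma pairing_eq_neg_one (h : IsTriangle P r) {b c : Fin 3} (hbc : b ≠ c) :
    P.pairing (r b) (r c) = -1 := by
  obtain ⟨σ, rfl, rfl⟩ : ∃ σ : Equiv.Perm (Fin 3), σ 1 = b ∧ σ 0 = c := by
    revert b c; decide
  exact (h.comp_equiv σ).pairing_one_zero

lemma injective (h : IsTriangle P r) : Function.Injective r := by
  intro b c hbc
  by_contra hne
  have hpair := h.pairing_eq_neg_one hne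
  rw [hbc, P.pairing_same] at hpair
  norm_num at hpair

end IsTriangle

namespace IsRootGrading

section Neg

variable {ι R M N A : Type*} [CommRing R] [AddCommGroup M] [Module R M]
  [AddCommGroup N] [Module R N] [AddGroup A] {P : RootPairing ι R M N} {d : ι → A}

lemma reflectionPerm_self (hd : IsRootGrading P d) (i : ι) : d (P.reflectionPerm i i) = -d i :=
  hd.neg (by simp)

lemma sub_notMem (hd : IsRootGrading P d) {i j : ι} (hij : d i = d j) :
    P.root i - P.root j ∉ Set.range P.root := by
  rintro ⟨k, hk⟩
  have hdeg : d i = d k + d j := hd.add (sub_eq_iff_eq_add.mp hk.symm)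
  exact hd.ne_zero k (by simpa [hij] using hdeg)

end Neg

section DegreeOne

variable {ι R M N : Type*} [CommRing R] [AddCommGroup M] [Module R M]
  [AddCommGroup N] [Module R N] {P : RootPairing ι R M N} {d : ι → ZMod 3} {i j : ι}

lemma eq_one_or_reflectionPerm_eq_one (hd : IsRootGrading P d) (i : ι) :
    d i = 1 ∨ d (P.reflectionPerm i i) = 1 := by
  rw [hd.reflectionPerm_self]
  have hi := hd.ne_zero i
  revert hi
  generalize d i = x
  revert x
  decide

lemma root_ne_neg (hd : IsRootGrading P d) (hi : d i = 1) (hj : d j = 1) :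
    P.root i ≠ -P.root j := by
  intro h
  have hdeg := hd.neg h
  rw [hi, hj] at hdeg
  exact absurd hdeg (by decide)

lemma isTriangle (hd : IsRootGrading P d) {r : Fin 3 → ι} (hr : ∀ b, d (r b) = 1)
    (hsum : ∑ b, P.root (r b) = 0) : IsTriangle P r where
  sum_root_eq_zero := hsum
  sub_notMem b c := hd.sub_notMem (by rw [hr, hr])

lemma exists_isTriangle_of_add_mem (hd : IsRootGrading P d) (hi : d i = 1) (hj : d j = 1)
    (hij : P.root i + P.root j ∈ Set.range P.root) :
    ∃ k, IsTriangle P ![i, j, k] ∧ ∀ b, d (![i, j, k] b) = 1 := by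
  obtain ⟨l, hl⟩ := hij
  have hdeg : ∀ b, d (![i, j, P.reflectionPerm l l] b) = 1 := by
    simp only [Fin.forall_fin_succ, Matrix.cons_val_zero, Matrix.cons_val_succ, hi, hj,
      hd.reflectionPerm_self, hd.add hl, IsEmpty.forall_iff, and_true, true_and]
    decide
  exact ⟨_, hd.isTriangle hdeg (by simp [Fin.sum_univ_three, ← hl]), hdeg⟩

end DegreeOne

section Field

variable {ι R M N : Type*} [Finite ι] [Field R] [CharZero R] [AddCommGroup M] [Module R M]
  [AddCommGroup N] [Module R N] {P : RootPairing ι R M N} [P.IsCrystallographic]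
  {d : ι → ZMod 3} {i j : ι}

lemma pairing_eq_zero_or_exists_isTriangle (hd : IsRootGrading P d) (hi : d i = 1) (hj : d j = 1)
    (hij : i ≠ j) :
    P.pairing i j = 0 ∨ ∃ k, IsTriangle P ![i, j, k] ∧ ∀ b, d (![i, j, k] b) = 1 := by
  by_cases hadd : P.root i + P.root j ∈ Set.range P.root
  · exact .inr (hd.exists_isTriangle_of_add_mem hi hj hadd)
  · exact .inl (P.pairing_eq_zero_of_add_notMem_of_sub_notMem hij (hd.root_ne_neg hi hj) hadd
      (hd.sub_notMem (hi.trans hj.symm)))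

variable [P.IsReduced]

lemma pairing_eq_zero_or_eq_neg_one (hd : IsRootGrading P d) (hi : d i = 1) (hj : d j = 1)
    (hij : i ≠ j) : P.pairing i j = 0 ∨ P.pairing i j = -1 :=
  (hd.pairing_eq_zero_or_exists_isTriangle hi hj hij).imp_right fun ⟨_, hT, _⟩ ↦
    hT.pairing_eq_neg_one zero_ne_one

lemma add_notMem_of_pairing_eq_zero (hd : IsRootGrading P d) (hi : d i = 1) (hj : d j = 1)
    (hij : P.pairing i j = 0) : P.root i + P.root j ∉ Set.range P.root := by
  intro hadd
  obtain ⟨k, hT, -⟩ := hd.exists_isTriangle_of_add_mem hi hj hadd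
  have hpair : P.pairing i j = -1 := hT.pairing_eq_neg_one zero_ne_one
  norm_num [hij] at hpair

lemma pairing_eq_zero_of_notMem_range (hd : IsRootGrading P d) {r : Fin 3 → ι}
    (hr : ∀ b, d (r b) = 1) (hT : IsTriangle P r) (hj : d j = 1) (hjr : j ∉ Set.range r)
    (b : Fin 3) : P.pairing (r b) j = 0 := by
  have hsum : ∑ c, P.pairing (r c) j = 0 := by
    simpa [P.root_coroot'_eq_pairing] using congrArg (P.coroot' j) hT.sum_root_eq_zero
  have hpair (c : Fin 3) : ∃ n : ℕ, P.pairing (r c) j = -n := by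
    rcases hd.pairing_eq_zero_or_eq_neg_one (hr c) hj fun h ↦ hjr ⟨c, h⟩ with h | h
    · exact ⟨0, by simp [h]⟩
    · exact ⟨1, by simp [h]⟩
  choose n hn using hpair
  have hn₀ : ∑ c, n c = 0 := by
    simp only [hn, Finset.sum_neg_distrib, neg_eq_zero] at hsum
    exact_mod_cast hsum
  simp [hn, Finset.sum_eq_zero_iff.mp hn₀ b (Finset.mem_univ b)]

end Field

end IsRootGrading

section Casimir

variable {ι R M N : Type*} [CommRing R] [AddCommGroup M] [Module R M]
  [AddCommGroup N] [Module R N]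

/-- The operator `x ↦ ∑ i ∈ s, ⟨x, αᵢ^∨⟩ αᵢ` on the weight space, attached to a set `s` of roots. -/
def rootCasimir (P : RootPairing ι R M N) (s : Finset ι) : Module.End R M :=
  ∑ i ∈ s, (P.coroot' i).smulRight (P.root i)

lemma rootCasimir_root (P : RootPairing ι R M N) (s : Finset ι) (i : ι) :
    rootCasimir P s (P.root i) = ∑ j ∈ s, P.pairing i j • P.root j := by
  simp [rootCasimir]

lemma trace_rootCasimir [Module.Free R M] [Module.Finite R M] (P : RootPairing ι R M N)
    (s : Finset ι) : LinearMap.trace R M (rootCasimir P s) = 2 * s.card := by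
  simp [rootCasimir, mul_comm]

end Casimir

namespace IsRootGrading

variable {ι R M N : Type*} [Fintype ι] [Field R] [CharZero R] [AddCommGroup M] [Module R M]
  [AddCommGroup N] [Module R N] {P : RootPairing ι R M N} [P.IsCrystallographic]
  {d : ι → ZMod 3} {i : ι}

lemma rootCasimir_root_of_not_exists_isTriangle (hd : IsRootGrading P d) (hi : d i = 1)
    (h : ¬ ∃ j k, IsTriangle P ![i, j, k] ∧ ∀ b, d (![i, j, k] b) = 1) :
    rootCasimir P {i | d i = 1} (P.root i) = 2 • P.root i := by
  rw [rootCasimir_root, Finset.sum_eq_single_of_mem i (by simpa using hi), P.pairing_same,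
    ofNat_smul_eq_nsmul]
  intro j hj hji
  have hpair := hd.pairing_eq_zero_or_exists_isTriangle hi (by simpa using hj) hji.symm
  rw [hpair.resolve_right fun ⟨k, hT⟩ ↦ h ⟨j, k, hT⟩, zero_smul]

variable [P.IsReduced]

lemma rootCasimir_root_of_isTriangle (hd : IsRootGrading P d) {r : Fin 3 → ι}
    (hr : ∀ b, d (r b) = 1) (hT : IsTriangle P r) (b : Fin 3) :
    rootCasimir P {i | d i = 1} (P.root (r b)) = 3 • P.root (r b) := by
  classical
  have hpair (c : Fin 3) : P.pairing (r b) (r c) = (if b = c then 3 else 0) - 1 := by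
    split_ifs with hbc
    · rw [hbc, P.pairing_same]; norm_num
    · rw [hT.pairing_eq_neg_one hbc]; norm_num
  calc rootCasimir P {i | d i = 1} (P.root (r b))
      = ∑ j ∈ Finset.univ.image r, P.pairing (r b) j • P.root j := by
        rw [rootCasimir_root]
        refine (Finset.sum_subset ?_ fun j hj hjr ↦ ?_).symm
        · simp [Finset.subset_iff, hr]
        · rw [hd.pairing_eq_zero_of_notMem_range hr hT (by simpa using hj) (by simpa using hjr),
            zero_smul]
    _ = ∑ c, P.pairing (r b) (r c) • P.root (r c) := Finset.sum_image hT.injective.injOn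
    _ = (3 : R) • P.root (r b) - ∑ c, P.root (r c) := by
        simp [hpair, sub_smul, ite_smul]
    _ = 3 • P.root (r b) := by rw [hT.sum_root_eq_zero, sub_zero, ofNat_smul_eq_nsmul]

lemma isIdempotentElem_three_sub_rootCasimir [P.IsRootSystem] (hd : IsRootGrading P d) :
    IsIdempotentElem (3 - rootCasimir P {i | d i = 1}) := by
  set E := rootCasimir P {i | d i = 1}
  have hE {i} (hi : d i = 1) : E (P.root i) = 3 • P.root i ∨ E (P.root i) = 2 • P.root i := by
    by_cases hT : ∃ j k, IsTriangle P ![i, j, k] ∧ ∀ b, d (![i, j, k] b) = 1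
    · obtain ⟨j, k, hT, hr⟩ := hT
      exact .inl (hd.rootCasimir_root_of_isTriangle hr hT 0)
    · exact .inr (hd.rootCasimir_root_of_not_exists_isTriangle hi hT)
  have hidem {i} (hi : d i = 1) : ((3 - E) * (3 - E)) (P.root i) = (3 - E) (P.root i) := by
    have h₃ : (3 - E) (P.root i) = 3 • P.root i - E (P.root i) := rfl
    rcases hE hi with h | h
    · rw [Module.End.mul_apply, h₃, h, sub_self, map_zero]
    · have hfix : (3 - E) (P.root i) = P.root i := by rw [h₃, h]; module
      rw [Module.End.mul_apply, hfix, hfix]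
  refine LinearMap.ext_on (RootPairing.IsRootSystem.span_root_eq_top (P := P)) ?_
  rintro - ⟨i, rfl⟩
  rcases hd.eq_one_or_reflectionPerm_eq_one i with hi | hi
  · exact hidem hi
  · refine neg_injective ?_
    simpa only [P.root_reflectionPerm, P.reflection_apply_self, LinearMap.map_neg] using hidem hi

lemma exists_isTriangle [P.IsRootSystem] [FiniteDimensional R M] (hd : IsRootGrading P d)
    (hcard : 2 * Fintype.card {i // d i = 1} = 3 * Module.finrank R M) (hi : d i = 1) :
    ∃ j k, IsTriangle P ![i, j, k] ∧ ∀ b, d (![i, j, k] b) = 1 := by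
  by_contra hT
  set E := rootCasimir P {i | d i = 1}
  have htrace : LinearMap.trace R M (3 - E) = 0 := by
    have h₃ : (3 : Module.End R M) = (3 : R) • LinearMap.id := by
      ext; simp [ofNat_smul_eq_nsmul]
    have hE : LinearMap.trace R M E = 3 * Module.finrank R M := by
      rw [trace_rootCasimir, ← Fintype.card_subtype]
      exact_mod_cast hcard
    rw [map_sub, hE, h₃, map_smul, LinearMap.trace_id, smul_eq_mul, sub_self]
  have hzero : 3 • P.root i - E (P.root i) = 0 :=
    LinearMap.congr_fun (LinearMap.IsIdempotentElem.eq_zero_of_trace_eq_zero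
      hd.isIdempotentElem_three_sub_rootCasimir htrace) (P.root i)
  rw [hd.rootCasimir_root_of_not_exists_isTriangle hi hT] at hzero
  refine P.ne_zero i ?_
  rw [← hzero]
  module

end IsRootGrading

section Setoid

lemma exists_equiv_prod_rel_iff {X : Type*} [Finite X] (s : Setoid X) {n m : ℕ} (hm : m ≠ 0)
    (hclass : ∀ x, Nat.card {y // s y x} = m) (hcard : Nat.card X = n * m) :
    ∃ e : Fin n × Fin m ≃ X, ∀ p q, s (e p) (e q) ↔ p.1 = q.1 := by
  have hfiber (c : Quotient s) : Nat.card {x // Quotient.mk s x = c} = m := by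
    induction c using Quotient.ind with
    | _ x => simpa only [Quotient.eq] using hclass x
  let eFiber (c : Quotient s) : Fin m ≃ {x // Quotient.mk s x = c} :=
    (Finite.equivFinOfCardEq (hfiber c)).symm
  let eProd : Quotient s × Fin m ≃ X :=
    (Equiv.sigmaEquivProd _ _).symm.trans <|
      (Equiv.sigmaCongrRight eFiber).trans (Equiv.sigmaFiberEquiv (Quotient.mk s))
  have hquot : Nat.card (Quotient s) = n := by
    refine Nat.eq_of_mul_eq_mul_right hm.pos ?_
    rw [← hcard, ← Nat.card_congr eProd, Nat.card_prod, Nat.card_fin]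
  let eQuot : Fin n ≃ Quotient s := (Finite.equivFinOfCardEq hquot).symm
  refine ⟨(eQuot.prodCongr (Equiv.refl _)).trans eProd, fun p q ↦ ?_⟩
  have hmk (p : Fin n × Fin m) :
      Quotient.mk s ((eQuot.prodCongr (Equiv.refl _)).trans eProd p) = eQuot p.1 :=
    (eFiber (eQuot p.1) p.2).2
  rw [← Quotient.eq, hmk, hmk, eQuot.apply_eq_iff_eq]

end Setoid

namespace IsRootGrading

section Field

variable {ι R M N : Type*} [Finite ι] [Field R] [CharZero R] [AddCommGroup M] [Module R M]
  [AddCommGroup N] [Module R N] {P : RootPairing ι R M N} [P.IsCrystallographic] [P.IsReduced]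
  {d : ι → ZMod 3}

lemma pairing_ne_zero_iff_mem_range (hd : IsRootGrading P d) {r : Fin 3 → ι}
    (hr : ∀ b, d (r b) = 1) (hT : IsTriangle P r) {j : ι} (hj : d j = 1) (b : Fin 3) :
    P.pairing (r b) j ≠ 0 ↔ j ∈ Set.range r := by
  refine ⟨not_imp_comm.mp fun h ↦ hd.pairing_eq_zero_of_notMem_range hr hT hj h b, ?_⟩
  rintro ⟨c, rfl⟩
  obtain rfl | hbc := eq_or_ne b c
  · simp
  · simp [hT.pairing_eq_neg_one hbc]

lemma isTriangle_of_pairing_ne_zero (hd : IsRootGrading P d) {r : Fin 3 → ι}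
    (hr : ∀ b, d (r b) = 1) (hinj : Function.Injective r)
    (hpair : ∀ b c, P.pairing (r b) (r c) ≠ 0) : IsTriangle P r := by
  obtain ⟨k, hT, hk⟩ := (hd.pairing_eq_zero_or_exists_isTriangle (hr 0) (hr 1)
    (hinj.ne zero_ne_one)).resolve_left (hpair 0 1)
  obtain ⟨c, hc⟩ := (hd.pairing_ne_zero_iff_mem_range hk hT (hr 2) 0).1 (hpair 0 2)
  have hr₂ : r = ![r 0, r 1, k] := by
    fin_cases c
    · exact absurd (hinj hc) (by decide)
    · exact absurd (hinj hc) (by decide)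
    · ext b
      fin_cases b
      exacts [rfl, rfl, hc.symm]
  exact hr₂ ▸ hT

lemma isTriangulation (hd : IsRootGrading P d) {κ : Type*} {r : κ → Fin 3 → ι}
    (hr : ∀ a b, d (r a b) = 1) (hsurj : ∀ i, d i = 1 → ∃ a b, r a b = i)
    (hT : ∀ a, IsTriangle P (r a))
    (hpair : ∀ ⦃a a'⦄, a ≠ a' → ∀ b c, P.pairing (r a b) (r a' c) = 0) : IsTriangulation P r where
  isTriangle := hT
  pairing_eq_zero := hpair
  add_notMem _ _ haa' b c := hd.add_notMem_of_pairing_eq_zero (hr _ b) (hr _ c) (hpair haa' b c)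
  sub_notMem _ _ _ b c := hd.sub_notMem (by rw [hr, hr])
  exists_root_eq i := by
    rcases hd.eq_one_or_reflectionPerm_eq_one i with hi | hi
    · obtain ⟨a, b, rfl⟩ := hsurj i hi
      exact ⟨a, b, .inl rfl⟩
    · obtain ⟨a, b, hab⟩ := hsurj _ hi
      exact ⟨a, b, .inr (by simp [hab])⟩

end Field

section Card

variable {ι R M N : Type*} [Fintype ι] [CommRing R] [AddCommGroup M] [Module R M]
  [AddCommGroup N] [Module R N] {P : RootPairing ι R M N} {d : ι → ZMod 3}

lemma two_mul_card_eq (hd : IsRootGrading P d) :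
    2 * Fintype.card {i // d i = 1} = Fintype.card ι := by
  let := P.indexNeg
  have hneg (i : ι) : d i = 1 ↔ d (-i) ≠ 1 := by
    have hi := hd.ne_zero i
    rw [P.indexNeg_neg, hd.reflectionPerm_self]
    generalize d i = x at hi ⊢
    decide +revert
  rw [two_mul]
  nth_rw 2 [Fintype.card_congr ((Equiv.neg ι).subtypeEquiv (q := (d · ≠ 1)) hneg)]
  rw [← Fintype.card_sum, Fintype.card_congr (Equiv.sumCompl _)]

end Card

section Field

variable {ι R M N : Type*} [Fintype ι] [Field R] [CharZero R] [AddCommGroup M] [Module R M]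
  [AddCommGroup N] [Module R N] {P : RootPairing ι R M N} [P.IsCrystallographic] [P.IsReduced]
  {d : ι → ZMod 3}

lemma exists_isTriangulation_of_forall_exists_isTriangle (hd : IsRootGrading P d)
    (hT : ∀ i, d i = 1 → ∃ j k, IsTriangle P ![i, j, k] ∧ ∀ b, d (![i, j, k] b) = 1) {n : ℕ}
    (hcard : Fintype.card ι = 6 * n) : ∃ r : Fin n → Fin 3 → ι, IsTriangulation P r := by
  have htri (i : {i // d i = 1}) : ∃ r : Fin 3 → {i // d i = 1}, IsTriangle P (Subtype.val ∘ r) ∧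
      ∀ j : {i // d i = 1}, P.pairing i j ≠ 0 ↔ j ∈ Set.range r := by
    obtain ⟨j, k, hT, hr⟩ := hT i i.2
    refine ⟨fun b ↦ ⟨_, hr b⟩, hT, fun j ↦ ?_⟩
    simpa only [Set.mem_range, Subtype.ext_iff, Matrix.cons_val_zero] using
      hd.pairing_ne_zero_iff_mem_range hr hT j.2 0
  choose t ht hmem using htri
  have hrel (i j k : {i // d i = 1}) (hij : P.pairing i j ≠ 0) (hik : P.pairing i k ≠ 0) :
      P.pairing j k ≠ 0 := by
    rw [hmem] at hij hik
    obtain ⟨b, rfl⟩ := hij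
    obtain ⟨c, rfl⟩ := hik
    exact (hd.pairing_ne_zero_iff_mem_range (fun b ↦ (t i b).2) (ht i) (t i c).2 b).2 ⟨c, rfl⟩
  let s : Setoid {i // d i = 1} :=
    { r i j := P.pairing i.1 j ≠ 0
      iseqv :=
        { refl i := by simp
          symm {i j} h := hrel i j i h (by simp)
          trans {i j k} hij hjk := hrel j i k (hrel i j i hij (by simp)) hjk } }
  have hclass (i) : Nat.card {j // s j i} = 3 := by
    have hs (j) : s j i ↔ j ∈ Set.range (t i) := s.comm'.trans (hmem i j)
    have hinj : Function.Injective (t i) := (ht i).injective.of_comp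
    rw [Nat.card_congr (Equiv.subtypeEquivRight hs),
      ← Nat.card_congr (Equiv.ofInjective _ hinj), Nat.card_fin]
  obtain ⟨e, he⟩ := exists_equiv_prod_rel_iff s three_ne_zero hclass (n := n) (by
    rw [Nat.card_eq_fintype_card]; have := hd.two_mul_card_eq; lia)
  refine ⟨fun a b ↦ e (a, b), hd.isTriangulation (fun a b ↦ (e (a, b)).2) (fun i hi ↦ ?_)
    (fun a ↦ ?_) fun a a' haa' b c ↦ ?_⟩
  · exact ⟨_, _, congrArg Subtype.val (e.apply_symm_apply ⟨i, hi⟩)⟩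
  · exact hd.isTriangle_of_pairing_ne_zero (fun b ↦ (e (a, b)).2) (fun b c h ↦
      (Prod.mk.inj (e.injective (Subtype.ext h))).2) fun b c ↦ (he (a, b) (a, c)).2 rfl
  · exact not_not.1 fun h ↦ haa' ((he (a, b) (a', c)).1 h)

lemma exists_isTriangulation [P.IsRootSystem] [FiniteDimensional R M] (hd : IsRootGrading P d)
    {n : ℕ} (hcard : Fintype.card ι = 6 * n) (hrank : Module.finrank R M = 2 * n) :
    ∃ r : Fin n → Fin 3 → ι, IsTriangulation P r := by
  refine hd.exists_isTriangulation_of_forall_exists_isTriangle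
    (fun i hi ↦ hd.exists_isTriangle ?_ hi) hcard
  rw [hd.two_mul_card_eq, hcard, hrank]
  ring

end Field

end IsRootGrading

/-! ### Degrees of root spaces -/

section RootSpace

open LieModule LieAlgebra.IsKilling

variable {K L : Type*} [Field K] [CharZero K] [LieRing L] [LieAlgebra K L] [FiniteDimensional K L]
  [IsKilling K L] {H : LieSubalgebra K L} [H.IsCartanSubalgebra] [IsTriangularizable K H L]
  {α β γ : Weight K H L} {x y : L}

lemma exists_smul_eq_of_mem_rootSpace (hα : α.IsNonZero) (hx : x ∈ rootSpace H α) (hx₀ : x ≠ 0)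
    (hy : y ∈ rootSpace H α) : ∃ c : K, c • x = y := by
  simpa using (finrank_eq_one_iff_of_nonzero' (⟨x, hx⟩ : rootSpace H α) (by simpa using hx₀)).mp
    (finrank_rootSpace_eq_one α hα) ⟨y, hy⟩

/- The `-α`-string through `β` is an irreducible module of the `sl₂`-triple of `-α`, and lowering a
highest weight vector to `β` and then once more to `α + β` never produces zero. -/
lemma exists_lie_ne_zero_of_add (hα : α.IsNonZero) (hγ : (γ : H → K) = α + β) :
    ∃ x ∈ rootSpace H α, ∃ y ∈ rootSpace H β, ⁅x, y⁆ ≠ 0 := by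
  obtain ⟨v, hv, hv₀⟩ := (chainTop (-α) β).exists_ne_zero
  obtain ⟨h, e, f, isSl2, he, hf⟩ := exists_isSl2Triple_of_weight_isNonZero hα.neg
  obtain rfl := isSl2.h_eq_coroot hα.neg he hf
  have hprim : isSl2.HasPrimitiveVectorWith v (chainLength (-α) β : K) := by
    have hev := lie_mem_genWeightSpace_of_mem_genWeightSpace he hv
    rw [genWeightSpace_add_chainTop _ _ hα.neg] at hev
    exact ⟨hv₀, (chainLength_smul _ _ hv).symm, hev⟩
  have hbot : 1 ≤ chainBotCoeff (-α) β := by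
    have h := (rootSpace_zsmul_add_ne_bot_iff (-α) β hα.neg (-1)).1 (by
      simpa [← hγ] using γ.genWeightSpace_ne_bot)
    simpa using h.2
  have hlen : chainTopCoeff (-α) β + 1 ≤ chainLength (-α) β := by
    rw [← chainBotCoeff_add_chainTopCoeff]; lia
  refine ⟨f, by simpa using hf, (toEnd K L L f ^ chainTopCoeff (-α) β) v, ?_, ?_⟩
  · have hmem := toEnd_pow_apply_mem hf hv (chainTopCoeff (-α) β)
    simpa using hmem
  · have hne := hprim.pow_toEnd_f_ne_zero_of_eq_nat rfl hlen
    rwa [pow_succ'] at hne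

lemma lie_ne_zero_of_mem_rootSpace (hα : α.IsNonZero) (hβ : β.IsNonZero)
    (hγ : (γ : H → K) = α + β) (hx : x ∈ rootSpace H α) (hx₀ : x ≠ 0)
    (hy : y ∈ rootSpace H β) (hy₀ : y ≠ 0) : ⁅x, y⁆ ≠ 0 := by
  obtain ⟨x', hx', y', hy', hne⟩ := exists_lie_ne_zero_of_add hα hγ
  obtain ⟨a, rfl⟩ := exists_smul_eq_of_mem_rootSpace hα hx hx₀ hx'
  obtain ⟨b, rfl⟩ := exists_smul_eq_of_mem_rootSpace hβ hy hy₀ hy'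
  contrapose! hne
  simp [hne]

end RootSpace

section DegreeOfRoot

open LieModule LieAlgebra.IsKilling DirectSum SetLike.GradedBracket

variable {K L A : Type*} [Field K] [CharZero K] [LieRing L] [LieAlgebra K L]
  [FiniteDimensional K L] [IsKilling K L] [AddCommGroup A] [DecidableEq A]
  (g : A → Submodule K L) [GradedLieAlgebra g] [(degreeZeroSubalgebra g).IsCartanSubalgebra]
  [IsTriangularizable K (degreeZeroSubalgebra g) L]

lemma exists_rootSpace_le {α : Weight K (degreeZeroSubalgebra g) L} (hα : α.IsNonZero) :
    ∃ k ≠ 0, (rootSpace (degreeZeroSubalgebra g) α).toSubmodule ≤ g k := by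
  obtain ⟨x, hx, hx₀⟩ := α.exists_ne_zero
  have hlie (h : degreeZeroSubalgebra g) (k : A) :
      ⁅(h : L), (decompose g x k : L)⁆ = α h • (decompose g x k : L) := by
    rw [← coe_decompose_lie_of_mem g h.2, zero_add,
      show ⁅(h : L), x⁆ = α h • x from lie_eq_smul_of_mem_rootSpace hx h, decompose_smul]
    rfl
  obtain ⟨k, hk⟩ : ∃ k, (decompose g x k : L) ≠ 0 := by
    contrapose! hx₀
    exact (decompose g).injective (by ext k; simpa using hx₀ k)
  refine ⟨k, ?_, fun y hy ↦ ?_⟩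
  · rintro rfl
    refine hα (funext fun h ↦ ?_)
    have hzero : ⁅h, (⟨_, (decompose g x 0).2⟩ : degreeZeroSubalgebra g)⁆ = 0 :=
      trivial_lie_zero _ _ _ _
    simpa [hk] using (hlie h 0).symm.trans (congrArg Subtype.val hzero)
  · have hmem : (decompose g x k : L) ∈ rootSpace (degreeZeroSubalgebra g) α :=
      weightSpace_le_genWeightSpace L _ ((mem_weightSpace _ _).2 fun h ↦ hlie h k)
    obtain ⟨c, rfl⟩ := exists_smul_eq_of_mem_rootSpace hα hmem hk hy
    exact (g k).smul_mem c (decompose g x k).2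

lemma exists_isRootGrading_rootSystem :
    ∃ d : (degreeZeroSubalgebra g).root → A,
      IsRootGrading (rootSystem (degreeZeroSubalgebra g)) d := by
  set H := degreeZeroSubalgebra g
  have hnz (α : H.root) : α.1.IsNonZero := LieSubalgebra.isNonZero_coe_root α
  choose d hd₀ hd using fun α : H.root ↦ exists_rootSpace_le g (hnz α)
  refine ⟨d, hd₀, fun α β hβ ↦ ?_, fun α β γ hγ ↦ ?_⟩
  · obtain ⟨h, e, f, isSl2, he, hf⟩ := exists_isSl2Triple_of_weight_isNonZero (hnz α)
    have hf' : f ∈ rootSpace H β.1 := by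
      have hcoe : (β.1 : H → K) = -α.1 := congrArg DFunLike.coe hβ
      rwa [hcoe]
    have hlie : h ∈ g (d α + d β) := isSl2.lie_e_f ▸ bracket_mem (hd α he) (hd β hf')
    have hzero : h ∈ g 0 := by
      rw [isSl2.h_eq_coroot (hnz α) he hf]
      exact (coroot α.1).2
    exact (neg_eq_of_add_eq_zero_right (degree_eq_of_mem_mem g hlie hzero isSl2.h_ne_zero)).symm
  · obtain ⟨x, hx, hx₀⟩ := α.1.exists_ne_zero
    obtain ⟨y, hy, hy₀⟩ := β.1.exists_ne_zero
    have hcoe : (γ.1 : H → K) = α.1 + β.1 := congrArg DFunLike.coe hγ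
    have hmem : ⁅x, y⁆ ∈ rootSpace H γ.1 :=
      hcoe ▸ lie_mem_genWeightSpace_of_mem_genWeightSpace hx hy
    exact degree_eq_of_mem_mem g (hd γ hmem) (bracket_mem (hd α hx) (hd β hy))
      (lie_ne_zero_of_mem_rootSpace (hnz α) (hnz β) hcoe hx hx₀ hy hy₀)

end DegreeOfRoot

/-! ### Chevalley generators of `sl₃` -/

section GeneratedByBrackets

open LieSubalgebra

variable {R L L' : Type*} [CommRing R] [LieRing L] [LieAlgebra R L] [LieRing L'] [LieAlgebra R L']
  {s t : Set L} {x y : L}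

lemma lie_eq_zero_of_mem_lieSpan_right (h : ∀ b ∈ t, ⁅x, b⁆ = 0) (hy : y ∈ lieSpan R L t) :
    ⁅x, y⁆ = 0 := by
  induction hy using lieSpan_induction with
  | mem b hb => exact h b hb
  | zero => exact lie_zero x
  | add u v _ _ hu hv => rw [lie_add, hu, hv, add_zero]
  | smul c u _ hu => rw [lie_smul, hu, smul_zero]
  | lie u v _ _ hu hv => rw [leibniz_lie, hu, hv, zero_lie, lie_zero, add_zero]

lemma lie_eq_zero_of_mem_lieSpan (h : ∀ a ∈ s, ∀ b ∈ t, ⁅a, b⁆ = 0) (hx : x ∈ lieSpan R L s)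
    (hy : y ∈ lieSpan R L t) : ⁅x, y⁆ = 0 := by
  refine lie_eq_zero_of_mem_lieSpan_right (fun b hb ↦ ?_) hy
  rw [← lie_skew, neg_eq_zero]
  refine lie_eq_zero_of_mem_lieSpan_right (fun a ha ↦ ?_) hx
  rw [← lie_skew, h a ha b hb, neg_zero]

lemma map_lie_of_lieSpan_eq_top (φ : L →ₗ[R] L') (hs : lieSpan R L s = ⊤)
    (h : ∀ a ∈ s, ∀ y, φ ⁅a, y⁆ = ⁅φ a, φ y⁆) (x y : L) : φ ⁅x, y⁆ = ⁅φ x, φ y⁆ := by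
  have hx : x ∈ lieSpan R L s := hs ▸ mem_top x
  induction hx using lieSpan_induction generalizing y with
  | mem a ha => exact h a ha y
  | zero => simp
  | add u v _ _ hu hv => simp [hu, hv]
  | smul c u _ hu => simp [hu]
  | lie u v _ _ hu hv => simp only [lie_lie, map_sub, hu, hv]

end GeneratedByBrackets

section Sl3

attribute [local instance] LieRing.ofAssociativeRing

variable {R L : Type*} [CommRing R] [LieRing L]

/-- Chevalley generators of `sl₃`: two `sl₂`-triples subject to the Serre relations for the Cartan
matrix of type `A₂`. This is the analogue of `IsSl2Triple` for `sl₃`. -/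
structure IsSl3Triple (h e f : Fin 2 → L) : Prop where
  isSl2Triple : ∀ i, IsSl2Triple (h i) (e i) (f i)
  lie_h_e : ∀ ⦃i j⦄, i ≠ j → ⁅h i, e j⁆ = -e j
  lie_h_f : ∀ ⦃i j⦄, i ≠ j → ⁅h i, f j⁆ = f j
  lie_e_f : ∀ ⦃i j⦄, i ≠ j → ⁅e i, f j⁆ = 0
  lie_e_lie_e_e : ∀ ⦃i j⦄, i ≠ j → ⁅e i, ⁅e i, e j⁆⁆ = 0
  lie_f_lie_f_f : ∀ ⦃i j⦄, i ≠ j → ⁅f i, ⁅f i, f j⁆⁆ = 0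

namespace IsSl3Triple

variable {h e f : Fin 2 → L} {i j : Fin 2}

lemma symm (t : IsSl3Triple h e f) : IsSl3Triple (-h) f e where
  isSl2Triple i := (t.isSl2Triple i).symm
  lie_h_e i j hij := by rw [Pi.neg_apply, neg_lie, t.lie_h_f hij]
  lie_h_f i j hij := by rw [Pi.neg_apply, neg_lie, t.lie_h_e hij, neg_neg]
  lie_e_f i j hij := by rw [← lie_skew, t.lie_e_f hij.symm, neg_zero]
  lie_e_lie_e_e := t.lie_f_lie_f_f
  lie_f_lie_f_f := t.lie_e_lie_e_e

lemma lie_f_lie_e_e (t : IsSl3Triple h e f) (hij : i ≠ j) : ⁅f i, ⁅e i, e j⁆⁆ = e j := by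
  rw [leibniz_lie, ← lie_skew (f i) (e i), (t.isSl2Triple i).lie_e_f, neg_lie, t.lie_h_e hij,
    t.symm.lie_e_f hij, lie_zero, neg_neg, add_zero]

lemma lie_e_lie_f_f (t : IsSl3Triple h e f) (hij : i ≠ j) : ⁅e i, ⁅f i, f j⁆⁆ = f j :=
  t.symm.lie_f_lie_e_e hij

lemma lie_e_lie_e_e' (t : IsSl3Triple h e f) (hij : i ≠ j) : ⁅e i, ⁅e j, e i⁆⁆ = 0 := by
  rw [← lie_skew (e j) (e i), lie_neg, t.lie_e_lie_e_e hij, neg_zero]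

lemma lie_e_lie_f_f' (t : IsSl3Triple h e f) (hij : i ≠ j) : ⁅e i, ⁅f j, f i⁆⁆ = -f j := by
  rw [← lie_skew (f j) (f i), lie_neg, t.lie_e_lie_f_f hij]

lemma lie_e_h_same (t : IsSl3Triple h e f) (i : Fin 2) : ⁅e i, h i⁆ = -(2 • e i) := by
  rw [← lie_skew, (t.isSl2Triple i).lie_h_e_nsmul]

lemma lie_e_h (t : IsSl3Triple h e f) (hij : i ≠ j) : ⁅e i, h j⁆ = e i := by
  rw [← lie_skew, t.lie_h_e hij.symm, neg_neg]

lemma lie_f_h_same (t : IsSl3Triple h e f) (i : Fin 2) : ⁅f i, h i⁆ = 2 • f i := by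
  rw [← lie_skew, (t.isSl2Triple i).lie_h_f_nsmul, neg_neg]

lemma lie_f_h (t : IsSl3Triple h e f) (hij : i ≠ j) : ⁅f i, h j⁆ = -f i := by
  rw [← lie_skew, t.lie_h_f hij.symm]

lemma lie_e_e_ne_zero (t : IsSl3Triple h e f) (hij : i ≠ j) : ⁅e i, e j⁆ ≠ 0 := by
  intro hzero
  have hlie := t.lie_f_lie_e_e hij
  rw [hzero, lie_zero] at hlie
  exact (t.isSl2Triple j).e_ne_zero hlie.symm

variable [LieAlgebra R L]

variable (e f) in
/-- The images under `sl₃ → L` of the elementary matrices, arranged as a matrix. On the diagonal, a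
matrix of trace zero is a combination of `diag(1, -1, 0)` and `diag(0, 1, -1)` with coefficients the
first entry and minus the last entry, so that the middle entry is left out. -/
def elementaryMatrixImages : Matrix (Fin 3) (Fin 3) L :=
  !![⁅e 0, f 0⁆, e 0, ⁅e 0, e 1⁆; f 0, 0, e 1; ⁅f 1, f 0⁆, f 1, -⁅e 1, f 1⁆]

variable (R e f) in
/-- The linear map underlying the homomorphism `sl₃ → L` determined by Chevalley generators. -/
def toLinearMap : SpecialLinear.sl (Fin 3) R →ₗ[R] L :=
  (∑ i, ∑ j, (Matrix.entryLinearMap R R i j).smulRight (elementaryMatrixImages e f i j)) ∘ₗ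
    (SpecialLinear.sl (Fin 3) R).toSubmodule.subtype

lemma toLinearMap_apply (M : SpecialLinear.sl (Fin 3) R) :
    toLinearMap R e f M = M.1 0 0 • ⁅e 0, f 0⁆ + M.1 0 1 • e 0 + M.1 0 2 • ⁅e 0, e 1⁆
      + M.1 1 0 • f 0 + M.1 1 2 • e 1 + M.1 2 0 • ⁅f 1, f 0⁆ + M.1 2 1 • f 1
      - M.1 2 2 • ⁅e 1, f 1⁆ := by
  have hM : (SpecialLinear.sl (Fin 3) R).toSubmodule.subtype M = M.1 := rfl
  simp [toLinearMap, hM, elementaryMatrixImages, Fin.sum_univ_three, sub_eq_add_neg, add_assoc,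
    -Submodule.subtype_apply, -lie_skew]

lemma apply_one_one (M : SpecialLinear.sl (Fin 3) R) : M.1 1 1 = -M.1 0 0 - M.1 2 2 := by
  have htrace : M.1.trace = 0 := M.2
  rw [Matrix.trace_fin_three] at htrace
  linear_combination htrace

variable (R) in
/-- The raising generators `E₁₂`, `E₂₃` of `sl₃`. -/
def standardRaising : Fin 2 → SpecialLinear.sl (Fin 3) R :=
  ![SpecialLinear.single 0 1 zero_ne_one 1, SpecialLinear.single 1 2 (by decide) 1]

variable (R) in
/-- The lowering generators `E₂₁`, `E₃₂` of `sl₃`. -/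
def standardLowering : Fin 2 → SpecialLinear.sl (Fin 3) R :=
  ![SpecialLinear.single 1 0 one_ne_zero 1, SpecialLinear.single 2 1 (by decide) 1]

lemma toLinearMap_standardRaising (i : Fin 2) :
    toLinearMap R e f (standardRaising R i) = e i := by
  fin_cases i <;> simp [toLinearMap_apply, standardRaising]

lemma toLinearMap_standardLowering (i : Fin 2) :
    toLinearMap R e f (standardLowering R i) = f i := by
  fin_cases i <;> simp [toLinearMap_apply, standardLowering]

lemma toLinearMap_standard (M : SpecialLinear.sl (Fin 3) R) :
    toLinearMap R (standardRaising R) (standardLowering R) M = M := by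
  rw [toLinearMap_apply]
  ext i j
  fin_cases i <;> fin_cases j <;>
    simp [standardRaising, standardLowering, Ring.lie_def, apply_one_one M, Matrix.sub_apply]

lemma toLinearMap_mem_lieSpan (M : SpecialLinear.sl (Fin 3) R) :
    toLinearMap R e f M ∈ LieSubalgebra.lieSpan R L (Set.range e ∪ Set.range f) := by
  set S := LieSubalgebra.lieSpan R L (Set.range e ∪ Set.range f)
  have he (i : Fin 2) : e i ∈ S := LieSubalgebra.subset_lieSpan (.inl ⟨i, rfl⟩)
  have hf (i : Fin 2) : f i ∈ S := LieSubalgebra.subset_lieSpan (.inr ⟨i, rfl⟩)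
  have hmem (i j : Fin 3) : elementaryMatrixImages e f i j ∈ S := by
    fin_cases i <;> fin_cases j
    exacts [S.lie_mem (he 0) (hf 0), he 0, S.lie_mem (he 0) (he 1), hf 0, S.zero_mem, he 1,
      S.lie_mem (hf 1) (hf 0), hf 1, S.toSubmodule.neg_mem (S.lie_mem (he 1) (hf 1))]
  have hsum : ∑ i, ∑ j, M.1 i j • elementaryMatrixImages e f i j ∈ S.toSubmodule :=
    S.toSubmodule.sum_mem fun i _ ↦ S.toSubmodule.sum_mem fun j _ ↦ S.smul_mem _ (hmem i j)
  have hM : (SpecialLinear.sl (Fin 3) R).toSubmodule.subtype M = M.1 := rfl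
  simpa [toLinearMap, hM, -Submodule.subtype_apply] using hsum

lemma lieSpan_standard :
    LieSubalgebra.lieSpan R (SpecialLinear.sl (Fin 3) R)
      (Set.range (standardRaising R) ∪ Set.range (standardLowering R)) = ⊤ :=
  eq_top_iff.mpr fun M _ ↦ toLinearMap_standard M ▸ toLinearMap_mem_lieSpan M

lemma toLinearMap_lie_standardRaising_zero (t : IsSl3Triple h e f)
    (M : SpecialLinear.sl (Fin 3) R) :
    toLinearMap R e f ⁅standardRaising R 0, M⁆ = ⁅e 0, toLinearMap R e f M⁆ := by
  have hlie : ⁅standardRaising R 0, M⁆.1 =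
      !![M.1 1 0, M.1 1 1 - M.1 0 0, M.1 1 2; 0, -M.1 1 0, 0; 0, -M.1 2 0, 0] := by
    ext i j
    fin_cases i <;> fin_cases j <;>
      simp [standardRaising, Ring.lie_def, Matrix.sub_apply, Matrix.mul_apply, Matrix.single_apply]
  simp only [toLinearMap_apply, hlie, apply_one_one M, Matrix.of_apply, Matrix.cons_val,
    lie_add, lie_sub, lie_smul, lie_self, (t.isSl2Triple 0).lie_e_f, (t.isSl2Triple 1).lie_e_f,
    t.lie_e_h_same, t.lie_e_h zero_ne_one, t.lie_e_f zero_ne_one, t.lie_e_lie_e_e zero_ne_one,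
    t.lie_e_lie_f_f' zero_ne_one]
  module

lemma toLinearMap_lie_standardRaising_one (t : IsSl3Triple h e f)
    (M : SpecialLinear.sl (Fin 3) R) :
    toLinearMap R e f ⁅standardRaising R 1, M⁆ = ⁅e 1, toLinearMap R e f M⁆ := by
  have hlie : ⁅standardRaising R 1, M⁆.1 =
      !![0, 0, -M.1 0 1; M.1 2 0, M.1 2 1, M.1 2 2 - M.1 1 1; 0, 0, -M.1 2 1] := by
    ext i j
    fin_cases i <;> fin_cases j <;>
      simp [standardRaising, Ring.lie_def, Matrix.sub_apply, Matrix.mul_apply, Matrix.single_apply]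
  have hskew : ⁅e 1, e 0⁆ = -⁅e 0, e 1⁆ := (lie_skew _ _).symm
  simp only [toLinearMap_apply, hlie, apply_one_one M, Matrix.of_apply, Matrix.cons_val,
    lie_add, lie_sub, lie_smul, lie_self, (t.isSl2Triple 0).lie_e_f, (t.isSl2Triple 1).lie_e_f,
    t.lie_e_h_same, t.lie_e_h one_ne_zero, t.lie_e_f one_ne_zero,
    t.lie_e_lie_e_e' one_ne_zero, t.lie_e_lie_f_f one_ne_zero, hskew]
  module

lemma toLinearMap_lie_standardLowering_zero (t : IsSl3Triple h e f)
    (M : SpecialLinear.sl (Fin 3) R) :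
    toLinearMap R e f ⁅standardLowering R 0, M⁆ = ⁅f 0, toLinearMap R e f M⁆ := by
  have hlie : ⁅standardLowering R 0, M⁆.1 =
      !![-M.1 0 1, 0, 0; M.1 0 0 - M.1 1 1, M.1 0 1, M.1 0 2; -M.1 2 1, 0, 0] := by
    ext i j
    fin_cases i <;> fin_cases j <;>
      simp [standardLowering, Ring.lie_def, Matrix.sub_apply, Matrix.mul_apply, Matrix.single_apply]
  have hskew : ⁅f 0, f 1⁆ = -⁅f 1, f 0⁆ := (lie_skew _ _).symm
  simp only [toLinearMap_apply, hlie, apply_one_one M, Matrix.of_apply, Matrix.cons_val,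
    lie_add, lie_sub, lie_smul, lie_self, (t.isSl2Triple 0).lie_e_f, (t.isSl2Triple 1).lie_e_f,
    (t.isSl2Triple 0).symm.lie_e_f, t.lie_f_h_same,
    t.lie_f_h zero_ne_one, t.symm.lie_e_f zero_ne_one, t.lie_f_lie_e_e zero_ne_one,
    t.symm.lie_e_lie_e_e' zero_ne_one, hskew]
  module

lemma toLinearMap_lie_standardLowering_one (t : IsSl3Triple h e f)
    (M : SpecialLinear.sl (Fin 3) R) :
    toLinearMap R e f ⁅standardLowering R 1, M⁆ = ⁅f 1, toLinearMap R e f M⁆ := by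
  have hlie : ⁅standardLowering R 1, M⁆.1 =
      !![0, -M.1 0 2, 0; 0, -M.1 1 2, 0; M.1 1 0, M.1 1 1 - M.1 2 2, M.1 1 2] := by
    ext i j
    fin_cases i <;> fin_cases j <;>
      simp [standardLowering, Ring.lie_def, Matrix.sub_apply, Matrix.mul_apply, Matrix.single_apply]
  simp only [toLinearMap_apply, hlie, apply_one_one M, Matrix.of_apply, Matrix.cons_val,
    lie_add, lie_sub, lie_smul, lie_self, (t.isSl2Triple 0).lie_e_f, (t.isSl2Triple 1).lie_e_f,
    (t.isSl2Triple 1).symm.lie_e_f, t.lie_f_h_same,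
    t.lie_f_h one_ne_zero, t.symm.lie_e_f one_ne_zero, t.symm.lie_e_lie_f_f' one_ne_zero,
    t.lie_f_lie_f_f one_ne_zero]
  module

/-- The homomorphism `sl₃ → L` determined by Chevalley generators. -/
def toLieHom (t : IsSl3Triple h e f) : SpecialLinear.sl (Fin 3) R →ₗ⁅R⁆ L :=
  { toLinearMap R e f with
    map_lie' {M N} := by
      refine map_lie_of_lieSpan_eq_top (toLinearMap R e f) lieSpan_standard ?_ M N
      rintro _ (⟨i, rfl⟩ | ⟨i, rfl⟩) y
      · rw [toLinearMap_standardRaising]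
        fin_cases i
        exacts [t.toLinearMap_lie_standardRaising_zero y, t.toLinearMap_lie_standardRaising_one y]
      · rw [toLinearMap_standardLowering]
        fin_cases i
        exacts [t.toLinearMap_lie_standardLowering_zero y,
          t.toLinearMap_lie_standardLowering_one y] }

lemma range_toLieHom (t : IsSl3Triple h e f) :
    (t.toLieHom (R := R)).range = LieSubalgebra.lieSpan R L (Set.range e ∪ Set.range f) := by
  refine le_antisymm ?_ (LieSubalgebra.lieSpan_le.mpr ?_)
  · rintro _ ⟨M, rfl⟩
    exact toLinearMap_mem_lieSpan M
  · rintro _ (⟨i, rfl⟩ | ⟨i, rfl⟩)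
    exacts [⟨standardRaising R i, toLinearMap_standardRaising i⟩,
      ⟨standardLowering R i, toLinearMap_standardLowering i⟩]

end IsSl3Triple

lemma finrank_specialLinear_add_one {K : Type*} [Field K] (n : Type*) [Fintype n] [DecidableEq n]
    [Nonempty n] :
    Module.finrank K (SpecialLinear.sl n K) + 1 = Fintype.card n ^ 2 := by
  have hker := LinearMap.finrank_range_add_finrank_ker (Matrix.traceLinearMap n K K)
  rw [LinearMap.range_eq_top.mpr Matrix.trace_surjective, finrank_top, Module.finrank_self,
    Module.finrank_matrix, Module.finrank_self, mul_one, ← sq, add_comm] at hker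
  exact hker

open DirectSum in
theorem nonempty_lieEquiv_directSum_specialLinear {K L κ : Type*} [Field K] [LieRing L]
    [LieAlgebra K L] [FiniteDimensional K L] [Fintype κ]
    {h e f : κ → Fin 2 → L} (t : ∀ a, IsSl3Triple (h a) (e a) (f a))
    (hcomm : Pairwise fun a b ↦ ∀ x ∈ Set.range (e a) ∪ Set.range (f a),
      ∀ y ∈ Set.range (e b) ∪ Set.range (f b), ⁅x, y⁆ = 0)
    (hgen : LieSubalgebra.lieSpan K L (⋃ a, Set.range (e a) ∪ Set.range (f a)) = ⊤)
    (hdim : Module.finrank K L = 8 * Fintype.card κ) :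
    Nonempty (L ≃ₗ⁅K⁆ ⨁ _ : κ, SpecialLinear.sl (Fin 3) K) := by
  classical
  let φ (a : κ) : SpecialLinear.sl (Fin 3) K →ₗ⁅K⁆ L := (t a).toLieHom
  have hφ : Pairwise fun a b ↦ ∀ x y, ⁅φ a x, φ b y⁆ = 0 := fun a b hab x y ↦
    lie_eq_zero_of_mem_lieSpan (hcomm hab) (IsSl3Triple.toLinearMap_mem_lieSpan x)
      (IsSl3Triple.toLinearMap_mem_lieSpan y)
  let Φ := toLieAlgebra L φ hφ
  have hsurj : Function.Surjective Φ := by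
    rw [← LieHom.range_eq_top, eq_top_iff, ← hgen, LieSubalgebra.lieSpan_le]
    refine Set.iUnion_subset fun a x hx ↦ ?_
    obtain ⟨M, rfl⟩ : x ∈ (φ a).range := by
      rw [(t a).range_toLieHom]
      exact LieSubalgebra.subset_lieSpan hx
    exact ⟨lof K κ _ a M, toModule_lof (φ := fun a ↦ (φ a).toLinearMap) K a M⟩
  have hrank : Module.finrank K (⨁ _ : κ, SpecialLinear.sl (Fin 3) K) = Module.finrank K L := by
    have hsl := finrank_specialLinear_add_one (K := K) (Fin 3)
    rw [Fintype.card_fin] at hsl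
    rw [Module.finrank_directSum, hdim, Finset.sum_const, Finset.card_univ, smul_eq_mul]
    lia
  have hinj : Function.Injective Φ :=
    (LinearMap.injective_iff_surjective_of_finrank_eq_finrank
      (f := (Φ : (⨁ _ : κ, SpecialLinear.sl (Fin 3) K) →ₗ[K] L)) hrank).mpr hsurj
  exact ⟨(LieEquiv.ofBijective Φ ⟨hinj, hsurj⟩).symm⟩

end Sl3

/-! ### Lie algebras whose roots form triangles -/

section RootSpaceGenerators

open LieModule LieAlgebra.IsKilling

variable {K L : Type*} [Field K] [LieRing L] [LieAlgebra K L] [FiniteDimensional K L]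
  {H : LieSubalgebra K L} [H.IsCartanSubalgebra] [IsTriangularizable K H L] {x y : L}

lemma iSup_rootSpace_toSubmodule :
    ⨆ χ : Weight K H L, (rootSpace H χ).toSubmodule = ⊤ := by
  rw [← LieSubmodule.iSup_toSubmodule, iSup_genWeightSpace_eq_top' K H L,
    LieSubmodule.top_toSubmodule]

variable [CharZero K] [IsKilling K L]

lemma lie_eq_zero_of_add_notMem_range {χ ψ : Module.Dual K H} (hx : x ∈ rootSpace H χ)
    (hy : y ∈ rootSpace H ψ) (hne : χ + ψ ≠ 0)
    (hroot : χ + ψ ∉ Set.range (rootSystem H).root) : ⁅x, y⁆ = 0 := by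
  have hlie : ⁅x, y⁆ ∈ rootSpace H (χ + ψ : Module.Dual K H) :=
    lie_mem_genWeightSpace_of_mem_genWeightSpace hx hy
  by_contra hxy
  let w : Weight K H L := ⟨(χ + ψ : Module.Dual K H), fun hbot ↦ hxy (by simpa [hbot] using hlie)⟩
  have hw : w.IsNonZero := fun hzero ↦ hne (DFunLike.coe_injective hzero)
  exact hroot ⟨⟨w, by simpa using hw⟩, rfl⟩

lemma lie_lie_eq_zero_of_add_add_notMem_range {χ ψ : Module.Dual K H} (hx : x ∈ rootSpace H χ)
    (hy : y ∈ rootSpace H ψ) (hne : χ + (χ + ψ) ≠ 0)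
    (hroot : χ + (χ + ψ) ∉ Set.range (rootSystem H).root) : ⁅x, ⁅x, y⁆⁆ = 0 := by
  have hlie : ⁅x, y⁆ ∈ rootSpace H (χ + ψ : Module.Dual K H) :=
    lie_mem_genWeightSpace_of_mem_genWeightSpace hx hy
  exact lie_eq_zero_of_add_notMem_range hx hlie hne hroot

lemma mem_of_mem_rootSpace {S : LieSubalgebra K L} {α : Weight K H L} (hα : α.IsNonZero)
    (hx : x ∈ rootSpace H α) (hx₀ : x ≠ 0) (hxS : x ∈ S) (hy : y ∈ rootSpace H α) : y ∈ S := by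
  obtain ⟨c, rfl⟩ := exists_smul_eq_of_mem_rootSpace hα hx hx₀ hy
  exact S.smul_mem c hxS

lemma eq_top_of_forall_rootSpace_le (S : LieSubalgebra K L)
    (hS : ∀ α : Weight K H L, α.IsNonZero → (rootSpace H α).toSubmodule ≤ S.toSubmodule) :
    S = ⊤ := by
  have hcoroot (α : H.root) : (coroot α.1 : L) ∈ S := by
    have hα := LieSubalgebra.isNonZero_coe_root α
    obtain ⟨h, e, f, isSl2, he, hf⟩ := exists_isSl2Triple_of_weight_isNonZero hα
    rw [← isSl2.h_eq_coroot hα he hf, ← isSl2.lie_e_f]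
    exact S.lie_mem (hS α.1 hα he) (hS (-α.1) hα.neg (by simpa using hf))
  have hH : (⊤ : Submodule K H) ≤ S.toSubmodule.comap H.toSubmodule.subtype := by
    rw [← RootPairing.IsRootSystem.span_coroot_eq_top (P := rootSystem H), Submodule.span_le]
    rintro _ ⟨α, rfl⟩
    exact hcoroot α
  rw [← LieSubalgebra.toSubmodule_eq_top, eq_top_iff, ← iSup_rootSpace_toSubmodule (H := H)]
  refine iSup_le fun χ x hx ↦ ?_
  by_cases hχ : χ.IsZero
  · have hxH : x ∈ H.toLieSubmodule := by
      rw [← rootSpace_zero_eq K L H, ← hχ.eq]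
      exact hx
    exact hH (x := ⟨x, hxH⟩) trivial
  · exact hS χ hχ hx

lemma finrank_eq_finrank_add_card_root :
    Module.finrank K L = Module.finrank K H + Fintype.card H.root := by
  classical
  rcases subsingleton_or_nontrivial L with _ | _
  · simp [Module.finrank_zero_of_subsingleton]
  have hindep : iSupIndep fun χ : Weight K H L ↦ (rootSpace H χ).toSubmodule :=
    LieSubmodule.iSupIndep_toSubmodule.mpr (iSupIndep_genWeightSpace' K H L)
  have hinternal := DirectSum.isInternal_submodule_of_iSupIndep_of_iSup_eq_top hindep
    iSup_rootSpace_toSubmodule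
  have hroot : Finset.univ.erase (0 : Weight K H L) = H.root := by
    ext χ
    simpa using (Weight.isZero_iff_eq_zero (χ := χ)).not.symm
  calc
    Module.finrank K L = ∑ χ : Weight K H L, Module.finrank K (rootSpace H χ) :=
      (LinearEquiv.ofBijective (DirectSum.coeLinearMap _) hinternal).finrank_eq.symm.trans
        (Module.finrank_directSum _ _)
    _ = Module.finrank K (rootSpace H (0 : Weight K H L)) +
        ∑ χ ∈ H.root, Module.finrank K (rootSpace H χ) := by
      rw [← Finset.add_sum_erase _ _ (Finset.mem_univ 0), hroot]
    _ = Module.finrank K H + ∑ χ ∈ H.root, 1 := by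
      congr 1
      · rw [FunLike.coe_zero, rootSpace_zero_eq]
        rfl
      · exact Finset.sum_congr rfl fun χ hχ ↦ finrank_rootSpace_eq_one χ (by simpa using hχ)
    _ = Module.finrank K H + Fintype.card H.root := by
      rw [Finset.sum_const, smul_eq_mul, mul_one, Fintype.card_coe]

end RootSpaceGenerators

namespace IsTriangulation

variable {ι κ R M N : Type*} [CommRing R] [AddCommGroup M] [Module R M]
  [AddCommGroup N] [Module R N] {P : RootPairing ι R M N} {r : κ → Fin 3 → ι} {a a' : κ}
  {b c : Fin 3} {χ ψ : M}

lemma add_ne_zero [NeZero (2 : R)] (h : IsTriangulation P r) (ha : a ≠ a')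
    (hχ : χ = P.root (r a b) ∨ χ = -P.root (r a b))
    (hψ : ψ = P.root (r a' c) ∨ ψ = -P.root (r a' c)) : χ + ψ ≠ 0 := by
  intro hzero
  have hpair := congrArg (fun v ↦ P.toLinearMap v (P.coroot (r a' c))) hzero
  rcases hχ with rfl | rfl <;> rcases hψ with rfl | rfl <;>
    simp [h.pairing_eq_zero ha, two_ne_zero] at hpair

lemma add_notMem_of_eq_or_eq_neg (h : IsTriangulation P r) (ha : a ≠ a')
    (hχ : χ = P.root (r a b) ∨ χ = -P.root (r a b))
    (hψ : ψ = P.root (r a' c) ∨ ψ = -P.root (r a' c)) : χ + ψ ∉ Set.range P.root := by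
  rcases hχ with rfl | rfl <;> rcases hψ with rfl | rfl
  · exact h.add_notMem ha b c
  · exact sub_eq_add_neg (P.root (r a b)) _ ▸ h.sub_notMem ha b c
  · rw [← P.neg_mem_range_root_iff, neg_add, neg_neg, ← sub_eq_add_neg]
    exact h.sub_notMem ha b c
  · rw [← P.neg_mem_range_root_iff, neg_add, neg_neg, neg_neg]
    exact h.add_notMem ha b c

end IsTriangulation

section Assembly

open LieModule LieAlgebra.IsKilling

variable {K L : Type*} [Field K] [CharZero K] [LieRing L] [LieAlgebra K L] [FiniteDimensional K L]
  [IsKilling K L] {H : LieSubalgebra K L} [H.IsCartanSubalgebra] [IsTriangularizable K H L]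

lemma IsTriangle.root_add_root_eq_neg {r : Fin 3 → H.root} (hr : IsTriangle (rootSystem H) r)
    {i j : Fin 2} (hij : i ≠ j) :
    (rootSystem H).root (r i.castSucc) + (rootSystem H).root (r j.castSucc) =
      -(rootSystem H).root (r 2) := by
  have := hr.zero_add_one
  fin_cases i <;> fin_cases j
  · simp at hij
  · exact this
  · exact (add_comm _ _).trans this
  · simp at hij

lemma IsTriangle.root_sub_root_ne_zero {r : Fin 3 → H.root} (hr : IsTriangle (rootSystem H) r)
    {b c : Fin 3} (hbc : b ≠ c) : (rootSystem H).root (r b) - (rootSystem H).root (r c) ≠ 0 :=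
  sub_ne_zero.mpr fun hroot ↦ hbc (hr.injective ((rootSystem H).root.injective hroot))

lemma IsTriangle.lie_lie_eq_zero {r : Fin 3 → H.root} (hr : IsTriangle (rootSystem H) r)
    {i j : Fin 2} (hij : i ≠ j) {x y : L} (hx : x ∈ rootSpace H (r i.castSucc).1)
    (hy : y ∈ rootSpace H (r j.castSucc).1) : ⁅x, ⁅x, y⁆⁆ = 0 := by
  have hsum : (rootSystem H).root (r i.castSucc) +
      ((rootSystem H).root (r i.castSucc) + (rootSystem H).root (r j.castSucc)) =
        (rootSystem H).root (r i.castSucc) - (rootSystem H).root (r 2) := by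
    rw [hr.root_add_root_eq_neg hij, sub_eq_add_neg]
  refine lie_lie_eq_zero_of_add_add_notMem_range (χ := (rootSystem H).root (r i.castSucc))
    (ψ := (rootSystem H).root (r j.castSucc)) hx hy ?_ ?_ <;> rw [hsum]
  exacts [hr.root_sub_root_ne_zero (Fin.castSucc_lt_last i).ne, hr.sub_notMem _ _]

lemma IsTriangle.lie_lie_eq_zero_of_neg {r : Fin 3 → H.root} (hr : IsTriangle (rootSystem H) r)
    {i j : Fin 2} (hij : i ≠ j) {x y : L} (hx : x ∈ rootSpace H (-(r i.castSucc).1 : H → K))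
    (hy : y ∈ rootSpace H (-(r j.castSucc).1 : H → K)) : ⁅x, ⁅x, y⁆⁆ = 0 := by
  have hsum : -(rootSystem H).root (r i.castSucc) +
      (-(rootSystem H).root (r i.castSucc) + -(rootSystem H).root (r j.castSucc)) =
        (rootSystem H).root (r 2) - (rootSystem H).root (r i.castSucc) := by
    rw [← neg_add, hr.root_add_root_eq_neg hij, neg_neg, sub_eq_neg_add]
  refine lie_lie_eq_zero_of_add_add_notMem_range (χ := -(rootSystem H).root (r i.castSucc))
    (ψ := -(rootSystem H).root (r j.castSucc)) hx hy ?_ ?_ <;> rw [hsum]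
  exacts [hr.root_sub_root_ne_zero (Fin.castSucc_lt_last i).ne', hr.sub_notMem _ _]

lemma IsTriangle.exists_isSl3Triple {r : Fin 3 → H.root} (hr : IsTriangle (rootSystem H) r) :
    ∃ h e f : Fin 2 → L, IsSl3Triple h e f ∧
      (∀ i, e i ∈ rootSpace H (r i.castSucc).1) ∧
      ∀ i, f i ∈ rootSpace H (-(r i.castSucc).1 : H → K) := by
  have hnz (i : Fin 2) : (r i.castSucc).1.IsNonZero := LieSubalgebra.isNonZero_coe_root _
  choose h e f isSl2 he hf using fun i ↦ exists_isSl2Triple_of_weight_isNonZero (hnz i)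
  have hpair {i j : Fin 2} (hij : i ≠ j) :
      (r j.castSucc).1 (coroot (r i.castSucc).1) = -1 := by
    rw [← rootSystem_pairing_apply]
    exact hr.pairing_eq_neg_one (by simpa using hij.symm)
  have hcoroot (i : Fin 2) {χ : H → K} {x : L} (hx : x ∈ rootSpace H χ) :
      ⁅h i, x⁆ = χ (coroot (r i.castSucc).1) • x := by
    rw [(isSl2 i).h_eq_coroot (hnz i) (he i) (hf i), ← lie_eq_smul_of_mem_rootSpace hx]
    rfl
  refine ⟨h, e, f, ⟨isSl2, fun i j hij ↦ ?_, fun i j hij ↦ ?_, fun i j hij ↦ ?_,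
    fun i j hij ↦ hr.lie_lie_eq_zero hij (he i) (he j),
    fun i j hij ↦ hr.lie_lie_eq_zero_of_neg hij (hf i) (hf j)⟩, he, hf⟩
  · rw [hcoroot i (he j), hpair hij, neg_one_smul]
  · rw [hcoroot i (hf j), Pi.neg_apply, hpair hij, neg_neg, one_smul]
  · refine lie_eq_zero_of_add_notMem_range (χ := (rootSystem H).root (r i.castSucc))
      (ψ := -(rootSystem H).root (r j.castSucc)) (he i) (hf j) ?_ ?_ <;> rw [← sub_eq_add_neg]
    exacts [hr.root_sub_root_ne_zero (by simpa using hij), hr.sub_notMem _ _]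

lemma IsSl3Triple.rootSpace_le {h e f : Fin 2 → L} (t : IsSl3Triple h e f)
    {χ : Fin 3 → Weight K H L} (hχ : ∀ b, (χ b).IsNonZero)
    (hsum : (χ 0 + χ 1 : H → K) = -χ 2) (he : ∀ i, e i ∈ rootSpace H (χ i.castSucc))
    (hf : ∀ i, f i ∈ rootSpace H (-χ i.castSucc : H → K)) {S : LieSubalgebra K L}
    (heS : ∀ i, e i ∈ S) (hfS : ∀ i, f i ∈ S) (b : Fin 3) :
    (rootSpace H (χ b)).toSubmodule ≤ S.toSubmodule := by
  intro y hy
  have hthird : ⁅f 0, f 1⁆ ∈ rootSpace H (χ 2) := by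
    have hneg : (χ 2 : H → K) = -χ 0 + -χ 1 := by rw [← neg_add, hsum, neg_neg]
    rw [hneg]
    exact lie_mem_genWeightSpace_of_mem_genWeightSpace (hf 0) (hf 1)
  fin_cases b
  · exact mem_of_mem_rootSpace (hχ 0) (he 0) (t.isSl2Triple 0).e_ne_zero (heS 0) hy
  · exact mem_of_mem_rootSpace (hχ 1) (he 1) (t.isSl2Triple 1).e_ne_zero (heS 1) hy
  · exact mem_of_mem_rootSpace (hχ 2) hthird (t.symm.lie_e_e_ne_zero zero_ne_one)
      (S.lie_mem (hfS 0) (hfS 1)) hy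

lemma IsSl3Triple.rootSpace_neg_le {h e f : Fin 2 → L} (t : IsSl3Triple h e f)
    {χ : Fin 3 → Weight K H L} (hχ : ∀ b, (χ b).IsNonZero)
    (hsum : (χ 0 + χ 1 : H → K) = -χ 2) (he : ∀ i, e i ∈ rootSpace H (χ i.castSucc))
    (hf : ∀ i, f i ∈ rootSpace H (-χ i.castSucc : H → K)) {S : LieSubalgebra K L}
    (heS : ∀ i, e i ∈ S) (hfS : ∀ i, f i ∈ S) (b : Fin 3) :
    (rootSpace H (-χ b : Weight K H L)).toSubmodule ≤ S.toSubmodule := by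
  refine t.symm.rootSpace_le (χ := fun b ↦ -χ b) (fun b ↦ (hχ b).neg) ?_ hf (fun i ↦ ?_) hfS heS b
  · rw [Weight.coe_neg, Weight.coe_neg, Weight.coe_neg, ← neg_add, hsum]
  · rw [Weight.coe_neg, neg_neg]
    exact he i

open DirectSum in
theorem IsTriangulation.nonempty_lieEquiv {κ : Type*} [Fintype κ]
    {r : κ → Fin 3 → H.root} (hr : IsTriangulation (rootSystem H) r)
    (hdim : Module.finrank K L = 8 * Fintype.card κ) :
    Nonempty (L ≃ₗ⁅K⁆ ⨁ _ : κ, SpecialLinear.sl (Fin 3) K) := by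
  choose h e f t he hf using fun a ↦ (hr.isTriangle a).exists_isSl3Triple
  have hweight (a : κ) {x : L} (hx : x ∈ Set.range (e a) ∪ Set.range (f a)) :
      ∃ (b : Fin 3) (χ : Module.Dual K H), x ∈ rootSpace H χ ∧
        (χ = (rootSystem H).root (r a b) ∨ χ = -(rootSystem H).root (r a b)) := by
    rcases hx with ⟨i, rfl⟩ | ⟨i, rfl⟩
    exacts [⟨i.castSucc, (rootSystem H).root (r a i.castSucc), he a i, .inl rfl⟩,
      ⟨i.castSucc, -(rootSystem H).root (r a i.castSucc), hf a i, .inr rfl⟩]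
  have hnz (a : κ) (b : Fin 3) : (r a b).1.IsNonZero := LieSubalgebra.isNonZero_coe_root _
  set S := LieSubalgebra.lieSpan K L (⋃ a, Set.range (e a) ∪ Set.range (f a))
  have heS (a : κ) (i : Fin 2) : e a i ∈ S :=
    LieSubalgebra.subset_lieSpan (Set.mem_iUnion.mpr ⟨a, .inl ⟨i, rfl⟩⟩)
  have hfS (a : κ) (i : Fin 2) : f a i ∈ S :=
    LieSubalgebra.subset_lieSpan (Set.mem_iUnion.mpr ⟨a, .inr ⟨i, rfl⟩⟩)
  have hsum (a : κ) : ((r a 0).1 + (r a 1).1 : H → K) = -(r a 2).1 :=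
    congrArg DFunLike.coe (hr.isTriangle a).zero_add_one
  refine nonempty_lieEquiv_directSum_specialLinear t (fun a a' ha x hx y hy ↦ ?_)
    (eq_top_of_forall_rootSpace_le (H := H) S fun α hα ↦ ?_) hdim
  · obtain ⟨b, χ, hxχ, hχ⟩ := hweight a hx
    obtain ⟨c, ψ, hyψ, hψ⟩ := hweight a' hy
    exact lie_eq_zero_of_add_notMem_range hxχ hyψ (hr.add_ne_zero ha hχ hψ)
      (hr.add_notMem_of_eq_or_eq_neg ha hχ hψ)
  · obtain ⟨a, b, hroot | hroot⟩ := hr.exists_root_eq ⟨α, by simpa using hα⟩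
    · have hα' : α = (r a b).1 := congrArg Subtype.val ((rootSystem H).root.injective hroot)
      exact hα' ▸ (t a).rootSpace_le (hnz a) (hsum a) (he a) (hf a) (heS a) (hfS a) b
    · have hα' : α = -(r a b).1 := DFunLike.coe_injective <| by
        simpa using congrArg DFunLike.coe hroot
      exact hα' ▸ (t a).rootSpace_neg_le (hnz a) (hsum a) (he a) (hf a) (heS a) (hfS a) b

end Assembly

section DirectSum

open DirectSum

/-- The direct sum of three copies of a Lie algebra, as an iterated product. -/
def directSumFinThreeLieEquivProd (R A : Type*) [CommRing R] [LieRing A] [LieAlgebra R A] :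
    (⨁ _ : Fin 3, A) ≃ₗ⁅R⁆ A × (A × A) where
  toFun x := (x 0, x 1, x 2)
  map_add' _ _ := rfl
  map_smul' _ _ := rfl
  map_lie' := rfl
  invFun x := DFinsupp.equivFunOnFintype.symm ![x.1, x.2.1, x.2.2]
  left_inv x := DFinsupp.ext fun i ↦ by
    fin_cases i <;> rfl
  right_inv _ := rfl

end DirectSum

open LieAlgebra.IsKilling DirectSum in
theorem z3_graded_semisimple_dim24_iso_sl3_cubed_general {K L : Type*} [Field K] [CharZero K]
    [IsAlgClosed K] [LieRing L] [LieAlgebra K L] [FiniteDimensional K L] [IsSemisimple K L]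
    {n : ℕ} (hdim : Module.finrank K L = 8 * n) (g : ZMod 3 → Submodule K L) [GradedLieAlgebra g]
    (habelian : ∀ x ∈ g 0, ∀ y ∈ g 0, ⁅x, y⁆ = 0) (hdim0 : Module.finrank K (g 0) = 2 * n) :
    Nonempty (L ≃ₗ⁅K⁆ ⨁ _ : Fin n, SpecialLinear.sl (Fin 3) K) := by
  have := isCartanSubalgebra_degreeZeroSubalgebra g habelian
  obtain ⟨d, hd⟩ := exists_isRootGrading_rootSystem g
  have hH : Module.finrank K (degreeZeroSubalgebra g) = 2 * n := hdim0
  have hcard : Fintype.card (degreeZeroSubalgebra g).root = 6 * n := by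
    have := finrank_eq_finrank_add_card_root (H := degreeZeroSubalgebra g)
    lia
  obtain ⟨r, hr⟩ := hd.exists_isTriangulation hcard (Subspace.dual_finrank_eq.trans hH)
  exact hr.nonempty_lieEquiv (by rw [hdim, Fintype.card_fin])

/-- A semisimple `ℤ/3ℤ`-graded complex Lie algebra `g = g₀ ⊕ g₁ ⊕ g₂` of dimension 24
whose degree-zero part `g₀` is an abelian 6-dimensional subalgebra acting semisimply on
`g₁` and `g₂` is isomorphic to the direct sum of three copies of `sl₃` (type `A₂³`). -/
theorem z3_graded_semisimple_dim24_iso_sl3_cubed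
    {L : Type*} [LieRing L] [LieAlgebra ℂ L] [FiniteDimensional ℂ L]
    [LieAlgebra.IsSemisimple ℂ L]
    (hdim : Module.finrank ℂ L = 24)
    (g : ZMod 3 → Submodule ℂ L)
    (hinternal : DirectSum.IsInternal g)
    (hgrad : ∀ i j : ZMod 3, ∀ x ∈ g i, ∀ y ∈ g j, ⁅x, y⁆ ∈ g (i + j))
    (habelian : ∀ x ∈ g 0, ∀ y ∈ g 0, ⁅x, y⁆ = 0)
    (hdim0 : Module.finrank ℂ (g 0) = 6)
    (hss : ∀ x ∈ g 0, ∀ k : ZMod 3, k ≠ 0 → ∃ s : Set L, s ⊆ g k ∧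
      Submodule.span ℂ s = g k ∧ ∀ y ∈ s, ∃ c : ℂ, ⁅x, y⁆ = c • y) :
    Nonempty (L ≃ₗ⁅ℂ⁆
      (SpecialLinear.sl (Fin 3) ℂ ×
        (SpecialLinear.sl (Fin 3) ℂ × SpecialLinear.sl (Fin 3) ℂ))) := by
  let _ : GradedLieAlgebra g :=
    { hinternal.chooseDecomposition with bracket_mem := fun _ _ _ _ hx hy ↦ hgrad _ _ _ hx _ hy }
  obtain ⟨e⟩ := z3_graded_semisimple_dim24_iso_sl3_cubed_general (n := 3) hdim g habelian hdim0
  exact ⟨e.trans (directSumFinThreeLieEquivProd ℂ _)⟩
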